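/- Let n ∈ ℕ with n ≥ 3, let m ∈ ℕ with m ≥ 3, and let F be a smooth symmetric 2-cotensor field on ℝ^n. Suppose that for every unit-speed great circle γ on the unit sphere S^{n−1} ⊂ ℝ^n one has ∫₀^π F(γ(t))(γ'(t), γ'(t))·(sin t)^m dt = 0. Then F(x)(V, V) = 0 for every x ∈ ℝ^n with ‖x‖ = 1 and every V ∈ ℝ^n with ⟨x, V⟩ = 0. -/

import Mathlib

open Real intervalIntegral
open scoped RealInnerProductSpace

/-!
Along a fixed great circle, rotating the starting point and integrating by parts turns the
hypothesis for the single weight `sin t ^ m` into the vanishing of all trigonometric moments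
`cos t ^ a * sin t ^ b` with `a + b = m`. Replace `F` by its tangential part and differentiate the
moments in the orthonormal frame `(u, v)`, tilting `u` or `v` towards a vector `e` orthogonal to
both: the combination `cos t * ∂v - sin t * ∂u` moves the velocity by
`(cos t ^ 2 + sin t ^ 2) • e = e` and leaves the point of the circle fixed. So at the cost of one
degree, one of the two arguments `γ'` is replaced by a constant vector; doing this twice leaves the
scalar functions `F (γ t) w w`, with moments of degree `m - 2`. Multiplying by `⟪x, γ t⟫ ^ (m - 2)`
lowers the degree to zero, so a continuous function on the sphere has vanishing half-circle
integrals.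

Such a function `h` is zero at every unit vector `x`. It is even, because consecutive half circles
have the same integral, so that `h (-x) = h x`. Averaging over rotations about `x` in a
three-dimensional subspace produces a function `φ` of the height with `∫ φ (r * cos t) = 0` for all
`r ∈ [0, 1]`; integrating this against `sin α` with `r = R * sin α` gives the integral of `φ` over
`[-R, R]` (Archimedes' hat-box theorem), which is therefore zero for `R ∈ [0, 1]`. Differentiating
at `R = 1` gives `φ 1 + φ (-1) = 0`.
-/

/-! ### Trigonometric weights on the half period -/

lemma integral_deriv_eq_zero_of_forall_integral_eq_zero {f : ℝ × ℝ → ℝ} {D : ℝ → ℝ}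
    {a b x₀ : ℝ} (hf : ContDiff ℝ 1 f) (hD : ∀ t, HasDerivAt (fun x => f (x, t)) (D t) x₀)
    (hzero : ∀ x, ∫ t in a..b, f (x, t) = 0) : ∫ t in a..b, D t = 0 := by
  let f' : ℝ × ℝ → ℝ := fun p => fderiv ℝ f p (1, 0)
  have hf'_cont : Continuous f' :=
    (hf.continuous_fderiv one_ne_zero).clm_apply continuous_const
  have hf' (x t : ℝ) : HasDerivAt (fun y => f (y, t)) (f' (x, t)) x :=
    (hf.differentiable one_ne_zero (x, t)).hasFDerivAt.comp_hasDerivAt x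
      ((hasDerivAt_id x).prodMk (hasDerivAt_const x t))
  obtain ⟨C, hC⟩ := ((isCompact_closedBall x₀ 1).prod
    (isCompact_uIcc (a := a) (b := b))).bddAbove_image hf'_cont.norm.continuousOn
  have hderiv := (hasDerivAt_integral_of_dominated_loc_of_deriv_le (μ := MeasureTheory.volume)
    (F := fun x t => f (x, t)) (F' := fun x t => f' (x, t)) (a := a) (b := b) (bound := fun _ => C)
    (Metric.closedBall_mem_nhds x₀ one_pos)
    (.of_forall fun x => (hf.continuous.comp (.prodMk_right x)).aestronglyMeasurable)
    ((hf.continuous.comp (.prodMk_right x₀)).intervalIntegrable _ _)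
    (hf'_cont.comp (.prodMk_right x₀)).aestronglyMeasurable
    (.of_forall fun t ht x hx => hC ⟨(x, t), ⟨hx, Set.uIoc_subset_uIcc ht⟩, rfl⟩)
    intervalIntegrable_const
    (.of_forall fun t _ x _ => hf' x t)).2
  simp only [hzero] at hderiv
  rw [funext fun t => (hD t).unique (hf' x₀ t)]
  exact hderiv.unique (hasDerivAt_const x₀ 0)

lemma integral_comp_add_mul_deriv_eq_zero {g W W' : ℝ → ℝ} {a b : ℝ} (hg : ContDiff ℝ 1 g)
    (hW : ContDiff ℝ 1 W) (hW' : ∀ t, HasDerivAt W (W' t) t) (ha : W a = 0) (hb : W b = 0)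
    (hzero : ∀ s, ∫ t in a..b, g (t + s) * W t = 0) (s : ℝ) :
    ∫ t in a..b, g (t + s) * W' t = 0 := by
  have hg' (t : ℝ) : HasDerivAt (fun t => g (t + s)) (deriv g (t + s)) t :=
    (hg.differentiable one_ne_zero (t + s)).hasDerivAt.comp_add_const t s
  have hW'_cont : Continuous W' := by
    simpa only [funext fun t => (hW' t).deriv] using hW.continuous_deriv le_rfl
  have hderiv : ∫ t in a..b, deriv g (t + s) * W t = 0 :=
    integral_deriv_eq_zero_of_forall_integral_eq_zero (f := fun p => g (p.2 + p.1) * W p.2)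
      (x₀ := s) (by fun_prop)
      (fun t =>
        ((hg.differentiable one_ne_zero (t + s)).hasDerivAt.comp_const_add t s).mul_const (W t))
      hzero
  rw [integral_mul_deriv_eq_deriv_mul (fun t _ => hg' t) (fun t _ => hW' t)
    (Continuous.intervalIntegrable (by fun_prop) _ _) (hW'_cont.intervalIntegrable _ _),
    hderiv, ha, hb]
  simp only [mul_zero, sub_zero]

lemma hasDerivAt_cos_pow_mul_sin_pow (a b : ℕ) (t : ℝ) :
    HasDerivAt (fun t => cos t ^ a * sin t ^ b)
      (b * (cos t ^ (a + 1) * sin t ^ (b - 1)) - a * (cos t ^ (a - 1) * sin t ^ (b + 1))) t := by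
  refine (((hasDerivAt_cos t).pow a).mul ((hasDerivAt_sin t).pow b)).congr_deriv ?_
  simp only [Pi.pow_apply]
  ring

lemma integral_comp_add_mul_cos_pow_mul_sin_pow_eq_zero {g : ℝ → ℝ} (hg : ContDiff ℝ 1 g)
    (a b : ℕ) (hzero : ∀ s, ∫ t in 0..π, g (t + s) * sin t ^ (a + b) = 0) (s : ℝ) :
    ∫ t in 0..π, g (t + s) * (cos t ^ a * sin t ^ b) = 0 := by
  induction a using Nat.strong_induction_on generalizing b s with
  | _ a ih =>
    rcases a with _ | a
    · simpa using hzero s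
    have hstep := integral_comp_add_mul_deriv_eq_zero (a := 0) (b := π) hg (by fun_prop)
      (hasDerivAt_cos_pow_mul_sin_pow a (b + 1)) (by simp) (by simp)
      (ih a a.lt_succ_self (b + 1) (by simpa only [add_assoc, add_comm 1 b] using hzero)) s
    have hlower : a * ∫ t in 0..π, g (t + s) * (cos t ^ (a - 1) * sin t ^ (b + 2)) = 0 := by
      rcases a with _ | a
      · simp
      · rw [Nat.add_sub_cancel, ih a (by lia) (b + 2)
          (by simpa only [show a + (b + 2) = a + 1 + 1 + b by lia] using hzero), mul_zero]
    have hexpand : ∫ t in 0..π, g (t + s) * (cos t ^ (a + 1) * sin t ^ b) * (b + 1) -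
        a * (g (t + s) * (cos t ^ (a - 1) * sin t ^ (b + 2))) = 0 := by
      refine Eq.trans (integral_congr fun t _ => ?_) hstep
      push_cast [Nat.add_sub_cancel]
      ring
    rw [integral_sub (Continuous.intervalIntegrable (by fun_prop) _ _)
      (Continuous.intervalIntegrable (by fun_prop) _ _), integral_mul_const,
      integral_const_mul, hlower, sub_zero] at hexpand
    exact (mul_eq_zero.mp hexpand).resolve_right (by positivity)

/-! ### The hat-box theorem -/

lemma integral_sin_pow_succ_mul_integral_cos_pow (k : ℕ) :
    (∫ α in 0..π, sin α ^ (k + 1)) * ∫ t in 0..π, cos t ^ k = π * ∫ z in (-1:ℝ)..1, z ^ k := by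
  rw [integral_pow]
  induction k using Nat.twoStepInduction with
  | zero => norm_num [mul_comm]
  | one => simp
  | more k ih _ =>
    rw [show k + 2 + 1 = (k + 1) + 2 by ring, integral_sin_pow, integral_cos_pow]
    simp only [sin_pi, sin_zero, ne_eq, Nat.add_eq_zero_iff, one_ne_zero, and_false,
      not_false_eq_true, zero_pow, zero_mul, mul_zero, sub_self, zero_div, zero_add]
    rw [mul_mul_mul_comm, ih]
    push_cast
    field_simp
    ring

lemma integral_sin_mul_integral_eval_sin_mul_cos (p : Polynomial ℝ) :
    ∫ α in 0..π, sin α * ∫ t in 0..π, p.eval (sin α * cos t)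
      = π * ∫ z in (-1:ℝ)..1, p.eval z := by
  induction p using Polynomial.induction_on' with
  | add p q hp hq =>
    have hadd (α : ℝ) : ∫ t in 0..π, (p.eval (sin α * cos t) + q.eval (sin α * cos t)) =
        (∫ t in 0..π, p.eval (sin α * cos t)) + ∫ t in 0..π, q.eval (sin α * cos t) :=
      integral_add (Continuous.intervalIntegrable (by fun_prop) _ _)
        (Continuous.intervalIntegrable (by fun_prop) _ _)
    simp only [Polynomial.eval_add, hadd, mul_add]
    rw [integral_add (Continuous.intervalIntegrable (by fun_prop) _ _)
        (Continuous.intervalIntegrable (by fun_prop) _ _), hp, hq,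
      integral_add (p.continuous.intervalIntegrable _ _) (q.continuous.intervalIntegrable _ _),
      mul_add]
  | monomial k c =>
    simp only [Polynomial.eval_monomial, mul_pow, integral_const_mul]
    rw [mul_left_comm π, ← integral_sin_pow_succ_mul_integral_cos_pow, ← integral_mul_const,
      ← integral_const_mul]
    congr! 2
    ring

lemma integral_sin_mul_integral_comp_sin_mul_cos {ψ : ℝ → ℝ} (hψ : Continuous ψ) :
    ∫ α in 0..π, sin α * ∫ t in 0..π, ψ (sin α * cos t) = π * ∫ z in (-1:ℝ)..1, ψ z := by
  let proj : ℝ → Set.Icc (-1:ℝ) 1 := Set.projIcc (-1) 1 (by norm_num)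
  have hproj : Continuous proj := continuous_projIcc
  have hproj_eq {z : ℝ} (hz : z ∈ Set.Icc (-1:ℝ) 1) : (proj z : ℝ) = z :=
    congrArg Subtype.val (Set.projIcc_of_mem _ hz)
  have hmem (α t : ℝ) : sin α * cos t ∈ Set.Icc (-1:ℝ) 1 :=
    abs_le.mp (abs_mul (sin α) _ ▸ mul_le_one₀ (abs_sin_le_one α) (abs_nonneg _) (abs_cos_le_one t))
  let S : C(Set.Icc (-1:ℝ) 1, ℝ) → ℝ := fun f =>
    ∫ α in 0..π, sin α * ∫ t in 0..π, f (proj (sin α * cos t))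
  let T : C(Set.Icc (-1:ℝ) 1, ℝ) → ℝ := fun f => π * ∫ z in (-1:ℝ)..1, f (proj z)
  have hS : Continuous S := by fun_prop
  have hT : Continuous T := by fun_prop
  have hrestrict {χ : ℝ → ℝ} {f : C(Set.Icc (-1:ℝ) 1, ℝ)} (hf : ∀ z, f z = χ z) :
      S f = (∫ α in 0..π, sin α * ∫ t in 0..π, χ (sin α * cos t)) ∧
        T f = π * ∫ z in (-1:ℝ)..1, χ z := by
    refine ⟨by simp only [S, hf, hproj_eq (hmem _ _)], ?_⟩
    refine congrArg (π * ·) (integral_congr fun z hz => ?_)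
    simp only [hf]
    rw [hproj_eq (by rwa [Set.uIcc_of_le (by norm_num)] at hz)]
  have hdense : Dense (polynomialFunctions (Set.Icc (-1:ℝ) 1) : Set C(Set.Icc (-1:ℝ) 1, ℝ)) := by
    rw [dense_iff_closure_eq, ← Subalgebra.topologicalClosure_coe,
      polynomialFunctions_closure_eq_top]
    rfl
  have hST : S = T := by
    refine hS.ext_on hdense hT ?_
    rintro _ ⟨p, -, rfl⟩
    obtain ⟨hSp, hTp⟩ := hrestrict (χ := p.eval) fun z => p.toContinuousMapOn_apply _ z
    exact hSp.trans ((integral_sin_mul_integral_eval_sin_mul_cos p).trans hTp.symm)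
  obtain ⟨hSψ, hTψ⟩ := hrestrict (χ := ψ) (f := ⟨fun z => ψ z, by fun_prop⟩) fun _ => rfl
  rw [← hSψ, ← hTψ, hST]

lemma integral_neg_self_eq_zero {φ : ℝ → ℝ} (hφ : Continuous φ) {R : ℝ}
    (hzero : ∀ r ∈ Set.Icc 0 R, ∫ t in 0..π, φ (r * cos t) = 0) (hR : 0 ≤ R) :
    ∫ z in -R..R, φ z = 0 := by
  have hscaled : π * ∫ z in (-1:ℝ)..1, φ (R * z) = 0 := by
    rw [← integral_sin_mul_integral_comp_sin_mul_cos (ψ := fun z => φ (R * z)) (by fun_prop)]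
    refine (integral_congr fun α hα => ?_).trans integral_zero
    rw [Set.uIcc_of_le pi_pos.le] at hα
    have hsin := sin_nonneg_of_mem_Icc hα
    simp only [← mul_assoc]
    rw [hzero _ ⟨mul_nonneg hR hsin, mul_le_of_le_one_right hR (sin_le_one α)⟩, mul_zero]
  have hsubst := smul_integral_comp_mul_left (a := -1) (b := 1) φ R
  rw [(mul_eq_zero.mp hscaled).resolve_left pi_ne_zero] at hsubst
  simpa using hsubst.symm

lemma apply_add_apply_neg_eq_zero_of_integral_comp_mul_cos {φ : ℝ → ℝ}
    (hφ : Continuous φ) {R : ℝ} (hR : 0 < R)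
    (hzero : ∀ r ∈ Set.Icc 0 R, ∫ t in 0..π, φ (r * cos t) = 0) : φ R + φ (-R) = 0 := by
  have hderiv : HasDerivAt (fun r => ∫ z in -r..r, φ z) (φ R + φ (-R)) R := by
    have hpos := (hφ.integral_hasStrictDerivAt 0 R).hasDerivAt
    have hneg := (hφ.integral_hasStrictDerivAt 0 (-R)).hasDerivAt.comp R (hasDerivAt_neg R)
    refine ((hpos.sub hneg).congr_deriv (by ring)).congr_of_eventuallyEq (.of_forall fun r => ?_)
    exact (integral_interval_sub_left (hφ.intervalIntegrable _ _) (hφ.intervalIntegrable _ _)).symm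
  have hconst : HasDerivWithinAt (fun r => ∫ z in -r..r, φ z) 0 (Set.Icc 0 R) R :=
    (hasDerivWithinAt_const R _ (0:ℝ)).congr_of_mem
      (fun r hr => integral_neg_self_eq_zero hφ
        (fun s hs => hzero s ⟨hs.1, hs.2.trans hr.2⟩) hr.1) (Set.right_mem_Icc.mpr hR.le)
  exact (uniqueDiffOn_Icc hR R (Set.right_mem_Icc.mpr hR.le)).eq_deriv _
    hderiv.hasDerivWithinAt hconst

/-! ### Great circles and functions on the sphere -/

section Circle

variable {E : Type*} [NormedAddCommGroup E] [InnerProductSpace ℝ E] {u v w : E}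

/-- For orthonormal `u, v` this is the unit-speed great circle through `u` with initial velocity
`v`; its velocity at time `t` is `greatCircle v (-u) t`. -/
noncomputable def greatCircle (u v : E) (t : ℝ) : E := cos t • u + sin t • v

@[fun_prop]
lemma continuous_greatCircle {X : Type*} [TopologicalSpace X] {f g : X → E} {θ : X → ℝ}
    (hf : Continuous f) (hg : Continuous g) (hθ : Continuous θ) :
    Continuous fun x => greatCircle (f x) (g x) (θ x) := by
  unfold greatCircle
  fun_prop

@[fun_prop]
lemma contDiff_greatCircle {X : Type*} [NormedAddCommGroup X] [NormedSpace ℝ X] {k : WithTop ℕ∞}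
    {f g : X → E} {θ : X → ℝ} (hf : ContDiff ℝ k f) (hg : ContDiff ℝ k g) (hθ : ContDiff ℝ k θ) :
    ContDiff ℝ k fun x => greatCircle (f x) (g x) (θ x) := by
  unfold greatCircle
  fun_prop

lemma hasDerivAt_greatCircle (u v : E) (t : ℝ) :
    HasDerivAt (greatCircle u v) (greatCircle v (-u) t) t := by
  refine (((hasDerivAt_cos t).smul_const u).add ((hasDerivAt_sin t).smul_const v)).congr_deriv ?_
  unfold greatCircle
  module

lemma greatCircle_add (u v : E) (s t : ℝ) :
    greatCircle u v (s + t) = greatCircle (greatCircle u v s) (greatCircle v (-u) s) t := by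
  simp only [greatCircle, cos_add, sin_add]
  module

lemma greatCircle_neg_right (u v : E) (t : ℝ) :
    greatCircle v (-u) t = -sin t • u + cos t • v := by
  unfold greatCircle
  module

lemma greatCircle_neg_neg (u v : E) (t : ℝ) : greatCircle (-u) (-v) t = -greatCircle u v t := by
  unfold greatCircle
  module

lemma inner_greatCircle_right (u v w : E) (t : ℝ) :
    ⟪w, greatCircle u v t⟫ = cos t * ⟪w, u⟫ + sin t * ⟪w, v⟫ := by
  simp only [greatCircle, inner_add_right, real_inner_smul_right]

lemma norm_greatCircle (hu : ‖u‖ = 1) (hv : ‖v‖ = 1) (huv : ⟪u, v⟫ = 0) (t : ℝ) :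
    ‖greatCircle u v t‖ = 1 := by
  rw [← sq_eq_sq₀ (norm_nonneg _) zero_le_one, greatCircle, norm_add_sq_real, norm_smul, norm_smul]
  simp [inner_smul_left, inner_smul_right, huv, hu, hv]

lemma inner_greatCircle_velocity (hu : ‖u‖ = 1) (hv : ‖v‖ = 1) (huv : ⟪u, v⟫ = 0) (t : ℝ) :
    ⟪greatCircle u v t, greatCircle v (-u) t⟫ = 0 := by
  simp only [greatCircle, inner_add_left, inner_add_right, real_inner_smul_left,
    real_inner_smul_right, inner_neg_right, real_inner_self_eq_norm_sq, real_inner_comm u v, hu,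
    hv, huv]
  ring

lemma inner_smul_greatCircle (u v w : E) (t : ℝ) :
    ⟪w, u⟫ • u + ⟪w, v⟫ • v = ⟪w, greatCircle u v t⟫ • greatCircle u v t +
      ⟪w, greatCircle v (-u) t⟫ • greatCircle v (-u) t := by
  simp only [inner_greatCircle_right, inner_neg_right]
  unfold greatCircle
  match_scalars <;> linear_combination (-⟪w, _⟫) * sin_sq_add_cos_sq t

lemma exists_smul_greatCircle_add_smul_velocity (a b : E) (p q : ℝ) :
    ∃ δ, ∀ θ, p • greatCircle a b θ + q • greatCircle b (-a) θ =
      √(p ^ 2 + q ^ 2) • greatCircle a b (θ + δ) := by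
  have hnorm : ‖(⟨p, q⟩ : ℂ)‖ = √(p ^ 2 + q ^ 2) := by
    rw [Complex.norm_def, Complex.normSq_mk, sq, sq]
  refine ⟨Complex.arg ⟨p, q⟩, fun θ => ?_⟩
  have hp := Complex.norm_mul_cos_arg ⟨p, q⟩
  have hq := Complex.norm_mul_sin_arg ⟨p, q⟩
  rw [greatCircle_add]
  change _ = _ • (_ • greatCircle a b θ + _ • greatCircle b (-a) θ)
  rw [smul_add, smul_smul, smul_smul, ← hnorm, hp, hq]

lemma greatCircle_periodic (a b : E) : Function.Periodic (greatCircle a b) (2 * π) := fun θ => by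
  simp [greatCircle]

end Circle

section Funk

variable {E : Type*} [NormedAddCommGroup E] [InnerProductSpace ℝ E] {h : E → ℝ}

lemma integral_comp_rotate_greatCircle (h : E → ℝ) (c a b : E) (p q : ℝ) :
    ∫ θ in 0..2 * π, h (c + (p • greatCircle a b θ + q • greatCircle b (-a) θ)) =
      ∫ θ in 0..2 * π, h (c + √(p ^ 2 + q ^ 2) • greatCircle a b θ) := by
  obtain ⟨δ, hδ⟩ := exists_smul_greatCircle_add_smul_velocity a b p q
  simp only [hδ]
  have hper : Function.Periodic
      (fun θ => h (c + √(p ^ 2 + q ^ 2) • greatCircle a b θ)) (2 * π) := fun θ => by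
    simp only [greatCircle_periodic a b θ]
  rw [integral_comp_add_right (fun θ => h (c + √(p ^ 2 + q ^ 2) • greatCircle a b θ)), zero_add,
    add_comm (2 * π), hper.intervalIntegral_add_eq δ 0, zero_add]

lemma exists_norm_eq_one_forall_inner_eq_zero (s : Finset E)
    (hs : (s.card : Cardinal) < Module.rank ℝ E) : ∃ e : E, ‖e‖ = 1 ∧ ∀ y ∈ s, ⟪y, e⟫ = 0 := by
  let K := Submodule.span ℝ (s : Set E)
  have hK : Kᗮ ≠ ⊥ := fun hbot => hs.not_ge <| by
    rw [← rank_top ℝ E, ← Submodule.orthogonal_eq_bot_iff.mp hbot]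
    exact rank_span_finset_le s
  obtain ⟨e, heK, he⟩ := Submodule.exists_mem_ne_zero_of_ne_bot hK
  refine ⟨‖e‖⁻¹ • e, norm_smul_inv_norm he, fun y hy => ?_⟩
  rw [real_inner_smul_right, heK y (Submodule.subset_span hy), mul_zero]

/-- The integral of `h` over the circle at height `z` along the axis `x` of the unit
sphere of `span {x, a, b}`, with respect to the angle. -/
noncomputable def latitudeIntegral (h : E → ℝ) (x a b : E) (z : ℝ) : ℝ :=
  ∫ θ in 0..2 * π, h (z • x + √(1 - z ^ 2) • greatCircle a b θ)

lemma continuous_latitudeIntegral (hh : Continuous h) (x a b : E) :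
    Continuous (latitudeIntegral h x a b) :=
  continuous_parametric_intervalIntegral_of_continuous' (by fun_prop) _ _

lemma latitudeIntegral_one (h : E → ℝ) (x a b : E) :
    latitudeIntegral h x a b 1 = 2 * π * h x := by
  simp [latitudeIntegral]

lemma latitudeIntegral_neg_one (h : E → ℝ) (x a b : E) :
    latitudeIntegral h x a b (-1) = 2 * π * h (-x) := by
  simp [latitudeIntegral]

lemma latitudeIntegral_mul_cos (h : E → ℝ) (x a b : E) {r : ℝ} (hr : r ∈ Set.Icc 0 1) (t : ℝ) :
    latitudeIntegral h x a b (r * cos t) = ∫ θ in 0..2 * π,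
      h (greatCircle (r • x + √(1 - r ^ 2) • greatCircle a b θ) (greatCircle b (-a) θ) t) := by
  have hsq : (√(1 - r ^ 2) * cos t) ^ 2 + sin t ^ 2 = 1 - (r * cos t) ^ 2 := by
    rw [mul_pow, sq_sqrt (by nlinarith [hr.1, hr.2]), sin_sq]
    ring
  rw [latitudeIntegral, ← hsq, ← integral_comp_rotate_greatCircle]
  congr! 3 with θ
  change _ = cos t • (r • x + √(1 - r ^ 2) • greatCircle a b θ) + sin t • greatCircle b (-a) θ
  module

lemma integral_latitudeIntegral_mul_cos_eq_zero (hh : Continuous h)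
    (hzero : ∀ u v : E, ‖u‖ = 1 → ‖v‖ = 1 → ⟪u, v⟫ = 0 → ∫ t in 0..π, h (greatCircle u v t) = 0)
    {x a b : E} (hx : ‖x‖ = 1) (ha : ‖a‖ = 1) (hb : ‖b‖ = 1) (hxa : ⟪x, a⟫ = 0)
    (hxb : ⟪x, b⟫ = 0) (hab : ⟪a, b⟫ = 0) {r : ℝ} (hr : r ∈ Set.Icc 0 1) :
    ∫ t in 0..π, latitudeIntegral h x a b (r * cos t) = 0 := by
  have hba : ⟪b, -a⟫ = 0 := by rw [inner_neg_right, real_inner_comm, hab, neg_zero]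
  simp only [latitudeIntegral_mul_cos h x a b hr]
  rw [MeasureTheory.intervalIntegral_intervalIntegral_swap]
  · refine (integral_congr fun θ _ => hzero _ _ ?_ ?_ ?_).trans integral_zero
    · have hxc : ⟪x, greatCircle a b θ⟫ = 0 := by
        rw [inner_greatCircle_right, hxa, hxb, mul_zero, mul_zero, add_zero]
      rw [← sq_eq_sq₀ (norm_nonneg _) zero_le_one, norm_add_sq_real, norm_smul, norm_smul, hx,
        norm_greatCircle ha hb hab, real_inner_smul_left, real_inner_smul_right, hxc, mul_one,
        mul_one, norm_eq_abs, norm_eq_abs, sq_abs, sq_abs, sq_sqrt (by nlinarith [hr.1, hr.2])]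
      ring
    · exact norm_greatCircle hb (by rwa [norm_neg]) hba θ
    · rw [inner_add_left, real_inner_smul_left, real_inner_smul_left,
        inner_greatCircle_velocity ha hb hab, inner_greatCircle_right, inner_neg_right, hxa, hxb]
      ring
  · exact ((by fun_prop : Continuous _).continuousOn.integrableOn_compact
      (isCompact_uIcc.prod isCompact_uIcc)).mono_set
      (Set.prod_mono Set.uIoc_subset_uIcc Set.uIoc_subset_uIcc)

lemma apply_neg_eq_of_integral_greatCircle_eq_zero (hh : Continuous h)
    (hzero : ∀ u v : E, ‖u‖ = 1 → ‖v‖ = 1 → ⟪u, v⟫ = 0 → ∫ t in 0..π, h (greatCircle u v t) = 0)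
    {x a : E} (hx : ‖x‖ = 1) (ha : ‖a‖ = 1) (hxa : ⟪x, a⟫ = 0) : h (-x) = h x := by
  have hax : ⟪a, -x⟫ = 0 := by rw [inner_neg_right, real_inner_comm, hxa, neg_zero]
  let g : ℝ → ℝ := fun t => h (greatCircle x a t)
  have hg : Continuous g := by fun_prop
  have hshift (s : ℝ) : ∫ t in s..s + π, g t = 0 := by
    rw [← hzero _ _ (norm_greatCircle hx ha hxa s) (norm_greatCircle ha (by rwa [norm_neg]) hax s)
      (inner_greatCircle_velocity hx ha hxa s)]
    simp only [← greatCircle_add]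
    rw [integral_comp_add_left (fun t => h (greatCircle x a t)), add_zero]
  have hprim (s : ℝ) : HasDerivAt (fun r => ∫ t in 0..r, g t) (g s) s :=
    (hg.integral_hasStrictDerivAt 0 s).hasDerivAt
  have hderiv : HasDerivAt (fun s => ∫ t in s..s + π, g t) (g π - g 0) 0 := by
    refine ((((hprim (0 + π)).comp_add_const 0 π).sub (hprim 0)).congr_deriv
      (by rw [zero_add])).congr_of_eventuallyEq (.of_forall fun s => ?_)
    exact (integral_interval_sub_left (hg.intervalIntegrable _ _) (hg.intervalIntegrable _ _)).symm
  simp only [hshift] at hderiv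
  have hg_eq := sub_eq_zero.mp (hderiv.unique (hasDerivAt_const 0 0))
  simpa [g, greatCircle] using hg_eq

theorem eq_zero_of_integral_greatCircle_eq_zero (hE : 2 < Module.rank ℝ E) (hh : Continuous h)
    (hzero : ∀ u v : E, ‖u‖ = 1 → ‖v‖ = 1 → ⟪u, v⟫ = 0 → ∫ t in 0..π, h (greatCircle u v t) = 0)
    {x : E} (hx : ‖x‖ = 1) : h x = 0 := by
  classical
  obtain ⟨a, ha, hxa⟩ := exists_norm_eq_one_forall_inner_eq_zero {x}
    (lt_trans (by norm_num) hE)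
  obtain ⟨b, hb, hxab⟩ := exists_norm_eq_one_forall_inner_eq_zero {x, a}
    (lt_of_le_of_lt (by exact_mod_cast Finset.card_le_two) hE)
  simp only [Finset.mem_insert, Finset.mem_singleton, forall_eq_or_imp, forall_eq] at hxa hxab
  have hodd := apply_add_apply_neg_eq_zero_of_integral_comp_mul_cos
    (continuous_latitudeIntegral hh x a b) one_pos fun r hr =>
      integral_latitudeIntegral_mul_cos_eq_zero hh hzero hx ha hb hxa hxab.1 hxab.2 hr
  rw [latitudeIntegral_one, latitudeIntegral_neg_one,
    apply_neg_eq_of_integral_greatCircle_eq_zero hh hzero hx ha hxa, ← two_mul] at hodd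
  simpa [pi_ne_zero] using hodd

end Funk

/-! ### Moments along great circles and 2-cotensors -/

section Moments

variable {E : Type*} [NormedAddCommGroup E] [InnerProductSpace ℝ E] {Φ : E × E → ℝ} {d : ℕ}

/-- The moments of degree `d` of `Φ (γ t, γ' t)` against the monomials in `cos t` and `sin t` vanish
over every unit-speed half great circle `γ`; here `Φ` is a function of a point and a direction. -/
def HasVanishingMoments (d : ℕ) (Φ : E × E → ℝ) : Prop :=
  ∀ ⦃u v : E⦄, ‖u‖ = 1 → ‖v‖ = 1 → ⟪u, v⟫ = 0 → ∀ ⦃a b : ℕ⦄, a + b = d →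
    ∫ t in 0..π, Φ (greatCircle u v t, greatCircle v (-u) t) * (cos t ^ a * sin t ^ b) = 0

lemma map_zero_prodMk_eq_cos_mul_sub_sin_mul (L : E × E →L[ℝ] ℝ) (e : E) (t : ℝ) :
    L (0, e) = cos t * L (sin t • e, cos t • e) - sin t * L (cos t • e, -sin t • e) := by
  simp only [← smul_eq_mul, ← map_smul, ← map_sub]
  congr 1
  simp only [Prod.smul_mk, Prod.mk_sub_mk, Prod.mk.injEq]
  constructor
  · module
  · match_scalars
    linear_combination -sin_sq_add_cos_sq t

lemma hasVanishingMoments_of_integral_mul_sin_pow_eq_zero (hΦ : ContDiff ℝ 1 Φ)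
    (hzero : ∀ u v : E, ‖u‖ = 1 → ‖v‖ = 1 → ⟪u, v⟫ = 0 →
      ∫ t in 0..π, Φ (greatCircle u v t, greatCircle v (-u) t) * sin t ^ d = 0) :
    HasVanishingMoments d Φ := by
  rintro u v hu hv huv a b rfl
  have hvu : ⟪v, -u⟫ = 0 := by rw [inner_neg_right, real_inner_comm, huv, neg_zero]
  have hmoment := integral_comp_add_mul_cos_pow_mul_sin_pow_eq_zero
    (g := fun t => Φ (greatCircle u v t, greatCircle v (-u) t)) (by fun_prop) a b (fun s => ?_) 0
  · simpa only [add_zero] using hmoment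
  · simpa only [add_comm _ s, greatCircle_add, greatCircle_neg_neg] using
      hzero _ _ (norm_greatCircle hu hv huv s) (norm_greatCircle hv (by rwa [norm_neg]) hvu s)
        (inner_greatCircle_velocity hu hv huv s)

namespace HasVanishingMoments

lemma integral_mul_linear_cos_sin (h : HasVanishingMoments (d + 1) Φ) (hΦ : Continuous Φ)
    {u v : E} (hu : ‖u‖ = 1) (hv : ‖v‖ = 1) (huv : ⟪u, v⟫ = 0) (p q : ℝ) {a b : ℕ}
    (hab : a + b = d) :
    ∫ t in 0..π, (cos t * p + sin t * q) * Φ (greatCircle u v t, greatCircle v (-u) t) *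
      (cos t ^ a * sin t ^ b) = 0 := by
  let M : ℕ → ℕ → ℝ → ℝ := fun a b t =>
    Φ (greatCircle u v t, greatCircle v (-u) t) * (cos t ^ a * sin t ^ b)
  have hM (a b : ℕ) (c : ℝ) : IntervalIntegrable (fun t => c * M a b t) MeasureTheory.volume 0 π :=
    Continuous.intervalIntegrable (by fun_prop) _ _
  calc
    _ = ∫ t in 0..π, (p * M (a + 1) b t + q * M a (b + 1) t) :=
      integral_congr fun t _ => by simp only [M]; ring
    _ = 0 := by
      rw [integral_add (hM ..) (hM ..), integral_const_mul, integral_const_mul,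
        h hu hv huv (by lia), h hu hv huv (by lia), mul_zero, mul_zero, add_zero]

lemma inner_fst_mul (h : HasVanishingMoments (d + 1) Φ) (hΦ : Continuous Φ) (w : E) :
    HasVanishingMoments d fun p => ⟪w, p.1⟫ * Φ p := fun u v hu hv huv _ _ hab => by
  simpa only [inner_greatCircle_right] using
    h.integral_mul_linear_cos_sin hΦ hu hv huv ⟪w, u⟫ ⟪w, v⟫ hab

lemma inner_snd_mul (h : HasVanishingMoments (d + 1) Φ) (hΦ : Continuous Φ) (w : E) :
    HasVanishingMoments d fun p => ⟪w, p.2⟫ * Φ p := fun u v hu hv huv _ _ hab => by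
  simpa only [inner_greatCircle_right] using
    h.integral_mul_linear_cos_sin hΦ hu hv huv ⟪w, v⟫ ⟪w, -u⟫ hab

lemma inner_fst_pow_mul (hΦ : Continuous Φ) (w : E) {k : ℕ} (h : HasVanishingMoments (d + k) Φ) :
    HasVanishingMoments d fun p => ⟪w, p.1⟫ ^ k * Φ p := by
  induction k generalizing Φ with
  | zero => simpa only [pow_zero, one_mul, add_zero] using h
  | succ k ih =>
    simpa only [pow_succ, mul_assoc] using ih (by fun_prop) (h.inner_fst_mul hΦ w)

lemma integral_fderiv_variation (h : HasVanishingMoments d Φ) (hΦ : ContDiff ℝ 1 Φ)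
    {U V : ℝ → E} {u' v' : E} {s : ℝ} (hU : ContDiff ℝ 1 U) (hV : ContDiff ℝ 1 V)
    (hU' : HasDerivAt U u' s) (hV' : HasDerivAt V v' s) (hU1 : ∀ s, ‖U s‖ = 1)
    (hV1 : ∀ s, ‖V s‖ = 1) (hUV : ∀ s, ⟪U s, V s⟫ = 0) {a b : ℕ} (hab : a + b = d) :
    ∫ t in 0..π, fderiv ℝ Φ (greatCircle (U s) (V s) t, greatCircle (V s) (-U s) t)
      (greatCircle u' v' t, greatCircle v' (-u') t) * (cos t ^ a * sin t ^ b) = 0 := by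
  refine integral_deriv_eq_zero_of_forall_integral_eq_zero (x₀ := s)
    (f := fun p => Φ (greatCircle (U p.1) (V p.1) p.2, greatCircle (V p.1) (-U p.1) p.2) *
      (cos p.2 ^ a * sin p.2 ^ b)) (by fun_prop) (fun t => ?_)
    (fun r => h (hU1 r) (hV1 r) (hUV r) hab)
  have hcircle {A B : ℝ → E} {a' b' : E} (hA : HasDerivAt A a' s) (hB : HasDerivAt B b' s) :
      HasDerivAt (fun r => greatCircle (A r) (B r) t) (greatCircle a' b' t) s :=
    (hA.const_smul (cos t)).add (hB.const_smul (sin t))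
  exact HasDerivAt.mul_const ((hΦ.differentiable one_ne_zero _).hasFDerivAt.comp_hasDerivAt s
    ((hcircle hU' hV').prodMk (hcircle hV' hU'.fun_neg))) (cos t ^ a * sin t ^ b)

lemma integral_fderiv_snd_of_norm_eq_one (h : HasVanishingMoments (d + 1) Φ)
    (hΦ : ContDiff ℝ 1 Φ) {u v e : E} (hu : ‖u‖ = 1) (hv : ‖v‖ = 1) (he : ‖e‖ = 1)
    (huv : ⟪u, v⟫ = 0) (hue : ⟪u, e⟫ = 0) (hve : ⟪v, e⟫ = 0) {a b : ℕ} (hab : a + b = d) :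
    ∫ t in 0..π, fderiv ℝ Φ (greatCircle u v t, greatCircle v (-u) t) (0, e) *
      (cos t ^ a * sin t ^ b) = 0 := by
  let D : E × E → ℝ → ℝ := fun w t =>
    fderiv ℝ Φ (greatCircle u v t, greatCircle v (-u) t) w
  have hrot (w : E) : HasDerivAt (greatCircle w e) e 0 := by
    simpa [greatCircle] using hasDerivAt_greatCircle w e 0
  have hstart (w : E) : greatCircle w e 0 = w := by simp [greatCircle]
  have hvaryU : ∫ t in 0..π, D (cos t • e, -sin t • e) t * (cos t ^ a * sin t ^ (b + 1)) = 0 := by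
    simpa [hstart, greatCircle, D] using h.integral_fderiv_variation hΦ (s := 0)
      (U := greatCircle u e) (V := fun _ => v)
      (by fun_prop) contDiff_const (hrot u) (hasDerivAt_const 0 v) (norm_greatCircle hu he hue)
      (fun _ => hv) (fun s => by
        rw [real_inner_comm, inner_greatCircle_right, real_inner_comm, huv, hve]; ring)
      (a := a) (b := b + 1) (by lia)
  have hvaryV : ∫ t in 0..π, D (sin t • e, cos t • e) t * (cos t ^ (a + 1) * sin t ^ b) = 0 := by
    simpa [hstart, greatCircle, D] using h.integral_fderiv_variation hΦ (s := 0)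
      (U := fun _ => u) (V := greatCircle v e)
      contDiff_const (by fun_prop) (hasDerivAt_const 0 u) (hrot v) (fun _ => hu)
      (norm_greatCircle hv he hve) (fun s => by rw [inner_greatCircle_right, huv, hue]; ring)
      (a := a + 1) (b := b) (by lia)
  calc
    _ = ∫ t in 0..π, (D (sin t • e, cos t • e) t * (cos t ^ (a + 1) * sin t ^ b) -
        D (cos t • e, -sin t • e) t * (cos t ^ a * sin t ^ (b + 1))) :=
      integral_congr fun t _ => by
        simp only [D]
        rw [map_zero_prodMk_eq_cos_mul_sub_sin_mul _ e t]
        ring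
    _ = 0 := by
      rw [integral_sub (Continuous.intervalIntegrable (by fun_prop) _ _)
        (Continuous.intervalIntegrable (by fun_prop) _ _), hvaryU, hvaryV, sub_zero]

lemma integral_fderiv_snd_of_orthogonal (h : HasVanishingMoments (d + 1) Φ)
    (hΦ : ContDiff ℝ 1 Φ) {u v e : E} (hu : ‖u‖ = 1) (hv : ‖v‖ = 1)
    (huv : ⟪u, v⟫ = 0) (hue : ⟪u, e⟫ = 0) (hve : ⟪v, e⟫ = 0) {a b : ℕ} (hab : a + b = d) :
    ∫ t in 0..π, fderiv ℝ Φ (greatCircle u v t, greatCircle v (-u) t) (0, e) *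
      (cos t ^ a * sin t ^ b) = 0 := by
  rcases eq_or_ne e 0 with rfl | he
  · simp only [Prod.mk_zero_zero, map_zero, zero_mul, integral_zero]
  have hunit := h.integral_fderiv_snd_of_norm_eq_one hΦ (e := ‖e‖⁻¹ • e) hu hv
    (norm_smul_inv_norm he) huv (by rw [real_inner_smul_right, hue, mul_zero])
    (by rw [real_inner_smul_right, hve, mul_zero]) hab
  have hscale : ((0, ‖e‖⁻¹ • e) : E × E) = ‖e‖⁻¹ • (0, e) := by simp
  simp only [hscale, map_smul, smul_eq_mul, mul_assoc, integral_const_mul] at hunit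
  exact (mul_eq_zero.mp hunit).resolve_left (inv_ne_zero (norm_ne_zero_iff.mpr he))

theorem fderiv_snd (h : HasVanishingMoments (d + 1) Φ) (hΦ : ContDiff ℝ 1 Φ) {k : ℝ}
    (hradial : ∀ x V, ‖x‖ = 1 → fderiv ℝ Φ (x, V) (0, x) = 0)
    (heuler : ∀ x V, fderiv ℝ Φ (x, V) (0, V) = k * Φ (x, V)) (w : E) :
    HasVanishingMoments d fun p => fderiv ℝ Φ p (0, w) := by
  intro u v hu hv huv a b hab
  let e : E := w - (⟪w, u⟫ • u + ⟪w, v⟫ • v)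
  have hue : ⟪u, e⟫ = 0 := by
    simp only [e, inner_sub_right, inner_add_right, real_inner_smul_right,
      real_inner_self_eq_norm_sq, hu, huv, real_inner_comm u w]
    ring
  have hve : ⟪v, e⟫ = 0 := by
    simp only [e, inner_sub_right, inner_add_right, real_inner_smul_right,
      real_inner_self_eq_norm_sq, hv, real_inner_comm u v, huv, real_inner_comm v w]
    ring
  have hsplit (t : ℝ) : fderiv ℝ Φ (greatCircle u v t, greatCircle v (-u) t) (0, w) =
      fderiv ℝ Φ (greatCircle u v t, greatCircle v (-u) t) (0, e) +
        k * (⟪w, greatCircle v (-u) t⟫ * Φ (greatCircle u v t, greatCircle v (-u) t)) := by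
    have hw : ((0, w) : E × E) = (0, e) + (⟪w, greatCircle u v t⟫ • (0, greatCircle u v t) +
        ⟪w, greatCircle v (-u) t⟫ • (0, greatCircle v (-u) t)) := by
      ext
      · simp
      · simp [e, inner_smul_greatCircle u v w t]
    conv_lhs => rw [hw]
    rw [map_add, map_add, map_smul, map_smul, hradial _ _ (norm_greatCircle hu hv huv t), heuler]
    simp only [smul_eq_mul]
    ring
  simp only [hsplit, add_mul, mul_assoc k]
  rw [integral_add (Continuous.intervalIntegrable (by fun_prop) _ _)
    (Continuous.intervalIntegrable (by fun_prop) _ _),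
    h.integral_fderiv_snd_of_orthogonal hΦ hu hv huv hue hve hab, integral_const_mul,
    h.inner_snd_mul hΦ.continuous w hu hv huv hab, mul_zero, add_zero]

end HasVanishingMoments

end Moments

section Tensor

variable {E : Type*} [NormedAddCommGroup E] [InnerProductSpace ℝ E]
  {F : E → E →L[ℝ] E →L[ℝ] ℝ}

lemma hasDerivAt_add_smul (V w : E) : HasDerivAt (fun t : ℝ => V + t • w) w 0 := by
  simpa using ((hasDerivAt_id (0 : ℝ)).smul_const w).const_add V

lemma fderiv_zero_right_apply_eq {Φ : E × E → ℝ} {x V w : E} {c : ℝ}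
    (hΦ : DifferentiableAt ℝ Φ (x, V)) (hc : HasDerivAt (fun t : ℝ => Φ (x, V + t • w)) c 0) :
    fderiv ℝ Φ (x, V) (0, w) = c := by
  have hline : HasLineDerivAt ℝ Φ c (x, V) (0, w) := by simpa [HasLineDerivAt] using hc
  rw [← hΦ.lineDeriv_eq_fderiv, hline.lineDeriv]

/-- For `‖x‖ = 1`, the 2-cotensor `F x` evaluated on the projections of `V` and `W` to the
hyperplane orthogonal to `x`. Off the unit sphere the same formula is kept, though it no longer
projects. -/
noncomputable def tangentialPart (F : E → E →L[ℝ] E →L[ℝ] ℝ) (x V W : E) : ℝ :=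
  F x (V - ⟪x, V⟫ • x) (W - ⟪x, W⟫ • x)

lemma tangentialPart_self_left {x : E} (hx : ‖x‖ = 1) (W : E) : tangentialPart F x x W = 0 := by
  simp [tangentialPart, hx]

lemma tangentialPart_self_right {x : E} (hx : ‖x‖ = 1) (V : E) : tangentialPart F x V x = 0 := by
  simp [tangentialPart, hx]

lemma tangentialPart_of_inner_eq_zero {x V W : E} (hV : ⟪x, V⟫ = 0) (hW : ⟪x, W⟫ = 0) :
    tangentialPart F x V W = F x V W := by
  simp only [tangentialPart, hV, hW, zero_smul, sub_zero]

@[fun_prop]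
lemma contDiff_tangentialPart {X : Type*} [NormedAddCommGroup X] [NormedSpace ℝ X]
    {k : WithTop ℕ∞} (hF : ContDiff ℝ k F) {f g h : X → E} (hf : ContDiff ℝ k f)
    (hg : ContDiff ℝ k g) (hh : ContDiff ℝ k h) :
    ContDiff ℝ k fun p => tangentialPart F (f p) (g p) (h p) := by
  unfold tangentialPart
  exact ((hF.comp hf).clm_apply (hg.sub ((hf.inner ℝ hg).smul hf))).clm_apply
    (hh.sub ((hf.inner ℝ hh).smul hf))

lemma hasDerivAt_tangentialPart (x : E) {V W : ℝ → E} {V' W' : E} {s : ℝ}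
    (hV : HasDerivAt V V' s) (hW : HasDerivAt W W' s) :
    HasDerivAt (fun t => tangentialPart F x (V t) (W t))
      (tangentialPart F x V' (W s) + tangentialPart F x (V s) W') s := by
  have hproj {A : ℝ → E} {A' : E} (hA : HasDerivAt A A' s) :
      HasDerivAt (fun t => A t - ⟪x, A t⟫ • x) (A' - ⟪x, A'⟫ • x) s :=
    hA.sub (((innerSL ℝ x).hasFDerivAt.comp_hasDerivAt s hA).smul_const x)
  exact ((F x).hasFDerivAt.comp_hasDerivAt s (hproj hV)).clm_apply (hproj hW)

lemma fderiv_tangentialPart_snd_snd (hF : ContDiff ℝ 1 F) (x V w : E) :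
    fderiv ℝ (fun p : E × E => tangentialPart F p.1 p.2 p.2) (x, V) (0, w) =
      tangentialPart F x w V + tangentialPart F x V w := by
  have hline := hasDerivAt_add_smul V w
  have hdiff : ContDiff ℝ 1 fun p : E × E => tangentialPart F p.1 p.2 p.2 := by fun_prop
  refine fderiv_zero_right_apply_eq (hdiff.differentiable one_ne_zero _) ?_
  simpa using hasDerivAt_tangentialPart (F := F) x hline hline

lemma fderiv_tangentialPart_add_swap (hF : ContDiff ℝ 1 F) (x V w z : E) :
    fderiv ℝ (fun p : E × E => tangentialPart F p.1 z p.2 + tangentialPart F p.1 p.2 z)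
      (x, V) (0, w) = tangentialPart F x z w + tangentialPart F x w z := by
  have hline := hasDerivAt_add_smul V w
  have hdiff : ContDiff ℝ 1 fun p : E × E =>
      tangentialPart F p.1 z p.2 + tangentialPart F p.1 p.2 z := by fun_prop
  refine fderiv_zero_right_apply_eq (hdiff.differentiable one_ne_zero _) ?_
  refine ((hasDerivAt_tangentialPart x (hasDerivAt_const 0 z) hline).add
    (hasDerivAt_tangentialPart x hline (hasDerivAt_const 0 z))).congr_deriv ?_
  simp [tangentialPart]

theorem HasVanishingMoments.tangentialPart_const (hF : ContDiff ℝ 1 F) {d : ℕ}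
    (h : HasVanishingMoments (d + 2) fun p : E × E => tangentialPart F p.1 p.2 p.2) (w : E) :
    HasVanishingMoments d fun p : E × E =>
      tangentialPart F p.1 w w + tangentialPart F p.1 w w := by
  have hmixed : HasVanishingMoments (d + 1) fun p : E × E =>
      tangentialPart F p.1 w p.2 + tangentialPart F p.1 p.2 w := by
    simpa only [fderiv_tangentialPart_snd_snd hF, Prod.mk.eta] using
      h.fderiv_snd (by fun_prop) (k := 2)
      (fun x V hx => by rw [fderiv_tangentialPart_snd_snd hF, tangentialPart_self_left hx,
        tangentialPart_self_right hx, add_zero])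
      (fun x V => by rw [fderiv_tangentialPart_snd_snd hF, two_mul]) w
  simpa only [fderiv_tangentialPart_add_swap hF, Prod.mk.eta] using
    hmixed.fderiv_snd (by fun_prop) (k := 1)
    (fun x V hx => by rw [fderiv_tangentialPart_add_swap hF, tangentialPart_self_left hx,
      tangentialPart_self_right hx, add_zero])
    (fun x V => by rw [fderiv_tangentialPart_add_swap hF, one_mul]) w

theorem tensor_vanishes_of_weighted_xray_vanishes_general
    (hE : 2 < Module.rank ℝ E) (m : ℕ) (hm : 2 ≤ m)
    (F : E → E →L[ℝ] E →L[ℝ] ℝ) (hF : ContDiff ℝ 1 F)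
    (h : ∀ u v : E, ‖u‖ = 1 → ‖v‖ = 1 → ⟪u, v⟫ = 0 →
      ∫ t in (0:ℝ)..π,
        F (Real.cos t • u + Real.sin t • v)
          (-Real.sin t • u + Real.cos t • v) (-Real.sin t • u + Real.cos t • v)
          * Real.sin t ^ m = 0) :
    ∀ x V : E, ‖x‖ = 1 → ⟪x, V⟫ = 0 → F x V V = 0 := by
  intro x V hx hxV
  obtain ⟨k, rfl⟩ := Nat.exists_eq_add_of_le' hm
  have hmoments : HasVanishingMoments (k + 2) fun p : E × E => tangentialPart F p.1 p.2 p.2 := by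
    refine hasVanishingMoments_of_integral_mul_sin_pow_eq_zero (by fun_prop) fun u v hu hv huv => ?_
    have hvelocity := inner_greatCircle_velocity hu hv huv
    simp only [tangentialPart_of_inner_eq_zero (hvelocity _) (hvelocity _)]
    simp only [greatCircle_neg_right]
    exact h u v hu hv huv
  have hfixed := hmoments.tangentialPart_const hF V
  let G : E → ℝ := fun y => tangentialPart F y V V + tangentialPart F y V V
  have hG : Continuous G := ContDiff.continuous (𝕜 := ℝ) (n := 1) (by fun_prop)
  have hweighted : HasVanishingMoments 0 fun p : E × E => ⟪x, p.1⟫ ^ k * G p.1 :=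
    .inner_fst_pow_mul (by fun_prop) x (by rwa [zero_add])
  have hvanish : ⟪x, x⟫ ^ k * G x = 0 := eq_zero_of_integral_greatCircle_eq_zero hE
    (h := fun y => ⟪x, y⟫ ^ k * G y) (by fun_prop) (fun u v hu hv huv => by
      simpa only [pow_zero, mul_one] using hweighted hu hv huv (zero_add 0)) hx
  simp only [G, real_inner_self_eq_norm_sq, hx, one_pow, one_mul,
    tangentialPart_of_inner_eq_zero hxV hxV] at hvanish
  exact add_self_eq_zero.mp hvanish

end Tensor

/-- Injectivity of the directionally dependent X-ray transform with weight
`(sin t)^m`, `m ≥ 3`, on tangential values of symmetric 2-cotensors on the unit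
sphere (the case of Proposition 3.1 where the boundary is the unit sphere). -/
theorem tensor_vanishes_of_weighted_xray_vanishes
    (n : ℕ) (hn : 3 ≤ n) (m : ℕ) (hm : 3 ≤ m)
    (F : EuclideanSpace ℝ (Fin n) →
      (EuclideanSpace ℝ (Fin n) →L[ℝ] EuclideanSpace ℝ (Fin n) →L[ℝ] ℝ))
    (hF : ContDiff ℝ (⊤ : ℕ∞) F)
    (hsymm : ∀ x V W, F x V W = F x W V)
    (h : ∀ u v : EuclideanSpace ℝ (Fin n), ‖u‖ = 1 → ‖v‖ = 1 → ⟪u, v⟫ = 0 →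
      ∫ t in (0:ℝ)..π,
        F (Real.cos t • u + Real.sin t • v)
          (-Real.sin t • u + Real.cos t • v) (-Real.sin t • u + Real.cos t • v)
          * Real.sin t ^ m = 0) :
    ∀ x V : EuclideanSpace ℝ (Fin n), ‖x‖ = 1 → ⟪x, V⟫ = 0 → F x V V = 0 := by
  have hrank : 2 < Module.rank ℝ (EuclideanSpace ℝ (Fin n)) := by
    rw [← Module.finrank_eq_rank, finrank_euclideanSpace_fin]
    exact_mod_cast hn
  exact tensor_vanishes_of_weighted_xray_vanishes_general hrank m (by lia) F
    (hF.of_le (by exact_mod_cast le_top)) h
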